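/- The Dedekind eta quotient z(τ) = (η(τ)η(6τ)/(η(2τ)η(3τ)))^{12} satisfies z(i/√30) = 161 - 72√5 = ((√5-1)/2)^{12}. -/

import Mathlib

open Complex

/-- The Dedekind eta function `η(τ) = e^{πiτ/12} ∏_{n≥1} (1 - e^{2πinτ})`. -/
noncomputable def dedekindEta (τ : ℂ) : ℂ :=
  Complex.exp (Real.pi * I * τ / 12) *
    ∏' n : ℕ, (1 - Complex.exp (2 * Real.pi * I * ((n : ℂ) + 1) * τ))

/-- The level-6 eta quotient `z(τ)`. -/
noncomputable def zEta (τ : ℂ) : ℂ :=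
  (dedekindEta τ * dedekindEta (6 * τ) / (dedekindEta (2 * τ) * dedekindEta (3 * τ))) ^ 12

/-!
Jacobi's triple product writes theta series as infinite products. Re-parametrising the lattice sum
of a product of two theta series along a sublattice of index 2 or 5 gives theta identities, which
as product identities become Schläfli's modular equations of degrees 3 and 5 for Weber's function
`𝔣₁`. Put `t = 1 / √30`. Then `z(it) = (u / v) ^ 12` with `u = 𝔣₁(2it)`, `v = 𝔣₁(6it)`, and the
degree 3 equation relates `u` to `v`. The degree 5 equation relates `u` to `𝔣₁(10it)`, which equals
`√2 / v` because `η(i / s) = √s η(is)` and `30 t² = 1`. Eliminating, `u⁴ + v⁴ = 3 (uv)²`, so that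
`(u / v)²` is the root `(3 - √5) / 2` of `X² - 3 X + 1`.
-/

open Filter Topology

section QPochhammer

/-- The finite `q`-Pochhammer symbol `(a; q)_n`. -/
def qPochhammer {R : Type*} [CommRing R] (a q : R) (n : ℕ) : R :=
  ∏ i ∈ Finset.range n, (1 - a * q ^ i)

/-- The infinite `q`-Pochhammer symbol `(a; q)_∞`, meaningful for `‖q‖ < 1`. -/
noncomputable def qPochhammerInf {𝕜 : Type*} [NormedField 𝕜] (a q : 𝕜) : 𝕜 :=
  ∏' n : ℕ, (1 - a * q ^ n)

lemma qPochhammer_zero {R : Type*} [CommRing R] (a q : R) : qPochhammer a q 0 = 1 :=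
  Finset.prod_range_zero _

lemma qPochhammer_succ {R : Type*} [CommRing R] (a q : R) (n : ℕ) :
    qPochhammer a q (n + 1) = qPochhammer a q n * (1 - a * q ^ n) :=
  Finset.prod_range_succ _ _

variable {𝕜 : Type*} [NormedField 𝕜] {a q : 𝕜}

lemma norm_pow_lt_one (hq : ‖q‖ < 1) {m : ℕ} (hm : m ≠ 0) : ‖q ^ m‖ < 1 := by
  simpa using pow_lt_one₀ (norm_nonneg q) hq hm

lemma summable_norm_neg_mul_pow (a : 𝕜) (hq : ‖q‖ < 1) : Summable fun n ↦ ‖-(a * q ^ n)‖ := by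
  simpa [norm_mul, norm_pow] using
    (summable_geometric_of_lt_one (norm_nonneg q) hq).mul_left ‖a‖

variable [CompleteSpace 𝕜]

lemma multipliable_one_sub_mul_pow (a : 𝕜) (hq : ‖q‖ < 1) :
    Multipliable fun n ↦ 1 - a * q ^ n := by
  simpa [sub_eq_add_neg] using
    multipliable_one_add_of_summable (summable_norm_neg_mul_pow a hq)

lemma tendsto_qPochhammer (a : 𝕜) (hq : ‖q‖ < 1) :
    Tendsto (qPochhammer a q) atTop (𝓝 (qPochhammerInf a q)) :=
  (multipliable_one_sub_mul_pow a hq).hasProd.tendsto_prod_nat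

lemma qPochhammerInf_ne_zero (hq : ‖q‖ < 1) (ha : ∀ n : ℕ, a * q ^ n ≠ 1) :
    qPochhammerInf a q ≠ 0 := by
  simpa [qPochhammerInf, sub_eq_add_neg] using
    tprod_one_add_ne_zero_of_summable (f := fun n ↦ -(a * q ^ n))
      (fun n ↦ by simpa [← sub_eq_add_neg, sub_eq_zero] using (ha n).symm)
      (summable_norm_neg_mul_pow a hq)

lemma qPochhammerInf_eq_mul (a : 𝕜) (hq : ‖q‖ < 1) :
    qPochhammerInf a q = (1 - a) * qPochhammerInf (a * q) q := by
  refine tendsto_nhds_unique ((tendsto_qPochhammer a hq).comp (tendsto_add_atTop_nat 1)) ?_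
  refine ((tendsto_qPochhammer (a * q) hq).const_mul (1 - a)).congr fun n ↦ ?_
  simp [qPochhammer, Finset.prod_range_succ', pow_succ', mul_assoc, mul_comm (1 - a)]

lemma qPochhammerInf_mul_neg (a : 𝕜) (hq : ‖q‖ < 1) :
    qPochhammerInf a q * qPochhammerInf (-a) q = qPochhammerInf (a ^ 2) (q ^ 2) := by
  rw [qPochhammerInf, qPochhammerInf, ← (multipliable_one_sub_mul_pow a hq).tprod_mul
    (multipliable_one_sub_mul_pow (-a) hq)]
  exact tprod_congr fun n ↦ by ring

lemma qPochhammerInf_eq_prod_range (a : 𝕜) (hq : ‖q‖ < 1) {m : ℕ} (hm : m ≠ 0) :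
    qPochhammerInf a q = ∏ k ∈ Finset.range m, qPochhammerInf (a * q ^ k) (q ^ m) := by
  have hmul : Tendsto (fun n ↦ m * n) atTop atTop :=
    tendsto_id.const_mul_atTop' (Nat.pos_of_ne_zero hm)
  refine tendsto_nhds_unique ((tendsto_qPochhammer a hq).comp hmul) ?_
  refine (tendsto_finsetProd (Finset.range m) fun k _ ↦
    tendsto_qPochhammer (a * q ^ k) (norm_pow_lt_one hq hm)).congr fun n ↦ ?_
  simp only [qPochhammer, Function.comp_apply]
  induction n with
  | zero => simp
  | succ n ih =>
    simp_rw [Finset.prod_range_succ, Finset.prod_mul_distrib, ih, mul_add_one,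
      Finset.prod_range_add]
    congr 1
    exact Finset.prod_congr rfl fun k _ ↦ by ring

end QPochhammer

section RealQPochhammer

lemma qPochhammerInf_pos {a q : ℝ} (ha : a < 1) (hq₀ : 0 ≤ q) (hq₁ : q < 1) :
    0 < qPochhammerInf a q := by
  have hq : ‖q‖ < 1 := by rwa [Real.norm_of_nonneg hq₀]
  have hfac (n : ℕ) : a * q ^ n < 1 := by
    rcases le_total a 0 with h | h
    · exact (mul_nonpos_of_nonpos_of_nonneg h (by positivity)).trans_lt one_pos
    · exact (mul_le_of_le_one_right h (pow_le_one₀ hq₀ hq₁.le)).trans_lt ha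
  refine (qPochhammerInf_ne_zero hq fun n ↦ (hfac n).ne).symm.lt_of_le ?_
  exact ge_of_tendsto' (tendsto_qPochhammer a hq) fun n ↦
    Finset.prod_nonneg fun i _ ↦ (sub_pos.mpr (hfac i)).le

lemma qPochhammerInf_anti {a b q r : ℝ} (ha : 0 ≤ a) (hab : a ≤ b) (hb : b ≤ 1) (hq : 0 ≤ q)
    (hqr : q ≤ r) (hr : r < 1) : qPochhammerInf b r ≤ qPochhammerInf a q := by
  have hnorm {x : ℝ} (hx₀ : 0 ≤ x) (hx : x < 1) : ‖x‖ < 1 := by rwa [Real.norm_of_nonneg hx₀]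
  refine le_of_tendsto_of_tendsto' (tendsto_qPochhammer b (hnorm (hq.trans hqr) hr))
    (tendsto_qPochhammer a (hnorm hq (hqr.trans_lt hr))) fun n ↦
      Finset.prod_le_prod (fun i _ ↦ ?_) fun i _ ↦ by gcongr; exact ha.trans hab
  exact sub_nonneg.mpr (mul_le_one₀ hb (pow_nonneg (hq.trans hqr) i)
    (pow_le_one₀ (hq.trans hqr) hr.le))
end RealQPochhammer

section LatticeSums

variable {M : Type*} [AddCommGroup M] [UniformSpace M] [IsUniformAddGroup M] [CompleteSpace M]
  [T2Space M]

lemma tsum_eq_sum_tsum_comp {α β ι : Type*} [Fintype ι] {F : α → M} (hF : Summable F)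
    {g : ι → β → α} (hg : Function.Bijective fun p : ι × β ↦ g p.1 p.2) :
    ∑' a, F a = ∑ i, ∑' b, F (g i b) := by
  have hFg : Summable fun p : ι × β ↦ F (g p.1 p.2) :=
    (Equiv.ofBijective _ hg).summable_iff.mpr hF
  rw [← (Equiv.ofBijective _ hg).tsum_eq, ← tsum_fintype (L := .unconditional ι)]
  exact hFg.tsum_prod

variable {F : ℤ × ℤ → M}

lemma tsum_eq_add_tsum_sum_diff (hF : Summable F) :
    ∑' n, F n = ∑' n : ℤ × ℤ, F (n.1 + n.2, n.1 - n.2) +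
      ∑' n : ℤ × ℤ, F (n.1 + n.2, n.1 - n.2 - 1) := by
  let g : Fin 2 → ℤ × ℤ → ℤ × ℤ :=
    ![fun n ↦ (n.1 + n.2, n.1 - n.2), fun n ↦ (n.1 + n.2, n.1 - n.2 - 1)]
  have hg : Function.Bijective fun p : Fin 2 × ℤ × ℤ ↦ g p.1 p.2 := by
    constructor
    · rintro ⟨i, x, y⟩ ⟨j, z, w⟩ h
      fin_cases i <;> fin_cases j <;> simp [g] at h ⊢ <;> omega
    · rintro ⟨m, n⟩
      rcases (m + n).even_or_odd' with ⟨x, hx | hx⟩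
      · exact ⟨(0, x, m - x), by simp [g]; omega⟩
      · exact ⟨(1, x + 1, m - x - 1), by simp [g]; omega⟩
  simpa [g, Fin.sum_univ_two] using tsum_eq_sum_tsum_comp hF hg

lemma tsum_eq_add_tsum_two_mul_add (hF : Summable F) :
    ∑' n, F n = ∑' n : ℤ × ℤ, F (2 * n.1 + n.2, n.2) +
      ∑' n : ℤ × ℤ, F (2 * n.1 + n.2, -1 - n.2) := by
  let g : Fin 2 → ℤ × ℤ → ℤ × ℤ :=
    ![fun n ↦ (2 * n.1 + n.2, n.2), fun n ↦ (2 * n.1 + n.2, -1 - n.2)]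
  have hg : Function.Bijective fun p : Fin 2 × ℤ × ℤ ↦ g p.1 p.2 := by
    constructor
    · rintro ⟨i, x, y⟩ ⟨j, z, w⟩ h
      fin_cases i <;> fin_cases j <;> simp [g] at h ⊢ <;> omega
    · rintro ⟨m, n⟩
      rcases (m + n).even_or_odd' with ⟨k, hk | hk⟩
      · exact ⟨(0, k - n, n), by simp [g]; omega⟩
      · exact ⟨(1, k + 1, -1 - n), by simp [g]; omega⟩
  simpa [g, Fin.sum_univ_two] using tsum_eq_sum_tsum_comp hF hg

lemma tsum_eq_add_tsum_neg_sub_two_mul (hF : Summable F) :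
    ∑' n, F n = ∑' n : ℤ × ℤ, F (n.1 + 2 * n.2, n.1) +
      ∑' n : ℤ × ℤ, F (-(n.1 + 2 * n.2 + 1), n.1) := by
  let g : Fin 2 → ℤ × ℤ → ℤ × ℤ :=
    ![fun n ↦ (n.1 + 2 * n.2, n.1), fun n ↦ (-(n.1 + 2 * n.2 + 1), n.1)]
  have hg : Function.Bijective fun p : Fin 2 × ℤ × ℤ ↦ g p.1 p.2 := by
    constructor
    · rintro ⟨i, x, y⟩ ⟨j, z, w⟩ h
      fin_cases i <;> fin_cases j <;> simp [g] at h ⊢ <;> omega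
    · rintro ⟨m, n⟩
      rcases (m + n).even_or_odd' with ⟨k, hk | hk⟩
      · exact ⟨(0, n, k - n), by simp [g]; omega⟩
      · exact ⟨(1, n, -k - 1), by simp [g]; omega⟩
  simpa [g, Fin.sum_univ_two] using tsum_eq_sum_tsum_comp hF hg

/-- The sublattice of index 5 is stable under the quarter turn `hrot`, which permutes its four other
cosets cyclically. -/
lemma tsum_eq_add_four_nsmul_tsum (hF : Summable F) (c : ℤ)
    (hrot : ∀ m n, F (c - n, m) = F (m, n)) :
    ∑' n, F n = ∑' n : ℤ × ℤ, F (n.1 - 2 * n.2 + c, 2 * n.1 + n.2 - c) +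
      4 • ∑' n : ℤ × ℤ, F (2 * n.1 + n.2 + 1 + 2 * c, 2 * n.2 - n.1 + c) := by
  let r : ℤ × ℤ → ℤ × ℤ := fun n ↦ (c - n.2, n.1)
  let g₁ : ℤ × ℤ → ℤ × ℤ := fun n ↦ (2 * n.1 + n.2 + 1 + 2 * c, 2 * n.2 - n.1 + c)
  let g : Fin 5 → ℤ × ℤ → ℤ × ℤ :=
    ![fun n ↦ (n.1 - 2 * n.2 + c, 2 * n.1 + n.2 - c), g₁, r ∘ g₁, r ∘ r ∘ g₁, r ∘ r ∘ r ∘ g₁]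
  have hg : Function.Bijective fun p : Fin 5 × ℤ × ℤ ↦ g p.1 p.2 := by
    constructor
    · rintro ⟨i, x, y⟩ ⟨j, z, w⟩ h
      fin_cases i <;> fin_cases j <;> simp [g, g₁, r] at h ⊢ <;> omega
    · rintro ⟨m, n⟩
      obtain ⟨k, hk⟩ : ∃ k, m + 2 * n + c = 5 * k ∨ m + 2 * n + c = 5 * k + 1 ∨
          m + 2 * n + c = 5 * k + 2 ∨ m + 2 * n + c = 5 * k + 4 ∨ m + 2 * n + c = 5 * k + 3 :=
        ⟨(m + 2 * n + c) / 5, by omega⟩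
      rcases hk with hk | hk | hk | hk | hk
      · exact ⟨(0, k, n - 2 * k + c), by simp [g]; omega⟩
      · exact ⟨(1, 2 * k - n - c, k - c), by simp [g, g₁]; omega⟩
      · exact ⟨(2, k - c, n - 2 * k - 1), by simp [g, g₁, r]; omega⟩
      · exact ⟨(3, n - 2 * k - 2, -k - 1), by simp [g, g₁, r]; omega⟩
      · exact ⟨(4, -k - 1, 2 * k + 1 - n - c), by simp [g, g₁, r]; omega⟩
  have hr : ∀ n, F (r n) = F n := fun n ↦ hrot n.1 n.2
  rw [tsum_eq_sum_tsum_comp hF hg, Fin.sum_univ_five]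
  simp only [g, Matrix.cons_val, Function.comp_apply, hr, g₁]
  abel

end LatticeSums

section QBinomial

variable {R : Type*} [CommRing R]

/-- The Gaussian binomial coefficient, defined through the `q`-Pascal rule so that it makes sense
at roots of unity. -/
def gaussBinom (q : R) : ℕ → ℕ → R
  | _, 0 => 1
  | 0, _ + 1 => 0
  | M + 1, j + 1 => gaussBinom q M j + q ^ (j + 1) * gaussBinom q M (j + 1)

lemma gaussBinom_zero_right (q : R) (M : ℕ) : gaussBinom q M 0 = 1 := by cases M <;> rfl

lemma gaussBinom_succ_succ (q : R) (M j : ℕ) :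
    gaussBinom q (M + 1) (j + 1) = gaussBinom q M j + q ^ (j + 1) * gaussBinom q M (j + 1) :=
  rfl

lemma gaussBinom_eq_zero_of_lt (q : R) {M j : ℕ} (h : M < j) : gaussBinom q M j = 0 := by
  induction M generalizing j with
  | zero => obtain ⟨j, rfl⟩ := Nat.exists_eq_add_one.mpr h; rfl
  | succ M ih =>
    obtain ⟨j, rfl⟩ := Nat.exists_eq_add_one.mpr (Nat.zero_lt_of_lt h)
    rw [gaussBinom_succ_succ, ih (by lia), ih (by lia), mul_zero, add_zero]

lemma gaussBinom_mul_qPochhammer (q : R) (j k : ℕ) :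
    gaussBinom q (j + k) j * (qPochhammer q q j * qPochhammer q q k) =
      qPochhammer q q (j + k) := by
  induction hM : j + k generalizing j k with
  | zero =>
    obtain ⟨rfl, rfl⟩ : j = 0 ∧ k = 0 := by lia
    simp [gaussBinom_zero_right, qPochhammer_zero]
  | succ M ih =>
    cases j with
    | zero => simp [gaussBinom_zero_right, qPochhammer_zero, ← hM]
    | succ j =>
      have hj := ih j k (by lia)
      rw [gaussBinom_succ_succ, qPochhammer_succ q q M, qPochhammer_succ q q j]
      cases k with
      | zero =>
        obtain rfl : j = M := by lia
        rw [gaussBinom_eq_zero_of_lt q j.lt_succ_self]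
        linear_combination (1 - q * q ^ j) * hj
      | succ k =>
        have hk := ih (j + 1) k (by lia)
        obtain rfl : M = j + k + 1 := by lia
        rw [qPochhammer_succ] at hk hj ⊢
        linear_combination (1 - q * q ^ j) * hj + q ^ (j + 1) * (1 - q * q ^ k) * hk

lemma prod_one_add_mul_pow_eq_sum_gaussBinom (q x : R) (M : ℕ) :
    ∏ k ∈ Finset.range M, (1 + x * q ^ k) =
      ∑ j ∈ Finset.range (M + 1), gaussBinom q M j * q ^ j.choose 2 * x ^ j := by
  induction M generalizing x with
  | zero => simp [gaussBinom_zero_right]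
  | succ M ih =>
    have hshift : ∏ k ∈ Finset.range M, (1 + x * q ^ (k + 1)) =
        ∑ j ∈ Finset.range (M + 1), gaussBinom q M j * q ^ (j + 1).choose 2 * x ^ j := by
      simp_rw [pow_succ' q, ← mul_assoc x, ih (x * q)]
      refine Finset.sum_congr rfl fun j _ ↦ ?_
      rw [Nat.choose_succ_succ' j 1, Nat.choose_one_right]
      ring
    have hsucc : ∑ j ∈ Finset.range (M + 1),
          gaussBinom q M (j + 1) * q ^ (j + 2).choose 2 * x ^ (j + 1) + 1 =
        ∑ j ∈ Finset.range (M + 1), gaussBinom q M j * q ^ (j + 1).choose 2 * x ^ j := by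
      have h := Finset.sum_range_succ'
        (fun j ↦ gaussBinom q M j * q ^ (j + 1).choose 2 * x ^ j) (M + 1)
      rw [Finset.sum_range_succ, gaussBinom_eq_zero_of_lt q M.lt_succ_self] at h
      simpa [gaussBinom_zero_right] using h.symm
    rw [Finset.prod_range_succ', hshift, Finset.sum_range_succ' _ (M + 1), pow_zero, mul_one,
      mul_one_add]
    nth_rewrite 1 [← hsucc]
    rw [Finset.sum_mul, add_right_comm, ← Finset.sum_add_distrib]
    simp only [gaussBinom_zero_right, Nat.choose_zero_succ, pow_zero, mul_one]
    congr 1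
    refine Finset.sum_congr rfl fun j _ ↦ ?_
    rw [gaussBinom_succ_succ, Nat.choose_succ_succ' (j + 1) 1, Nat.choose_one_right]
    ring

end QBinomial

section JacobiTripleProduct

lemma prod_one_add_mul_zpow_centered {K : Type*} [Field K] {q z : K} (hq : q ≠ 0) (hz : z ≠ 0)
    (N : ℕ) :
    ∏ k ∈ Finset.range (2 * N), (1 + z * q ^ (2 * k + 1 - 2 * N : ℤ)) =
      z ^ N * q ^ (-(N : ℤ) ^ 2) *
        (qPochhammer (-z * q) (q ^ 2) N * qPochhammer (-z⁻¹ * q) (q ^ 2) N) := by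
  induction N with
  | zero => simp [qPochhammer_zero]
  | succ N ih =>
    have hfirst : 1 + z * q ^ (-(2 * N + 1) : ℤ) =
        z * q ^ (-(2 * N + 1) : ℤ) * (1 + z⁻¹ * q ^ (2 * N + 1)) := by
      have : q ^ (-(2 * N + 1) : ℤ) * q ^ (2 * N + 1) = 1 := by
        rw [← zpow_natCast, ← zpow_add₀ hq]; simp
      field_simp
      linear_combination -this
    have hlast : q ^ (2 * ((2 * N + 1 : ℕ) : ℤ) + 1 - 2 * ((N + 1 : ℕ) : ℤ)) =
        q ^ (2 * N + 1) := by
      rw [← zpow_natCast]; congr 1; push_cast; ring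
    have hsq : q ^ (-((N + 1 : ℕ) : ℤ) ^ 2) = q ^ (-(N : ℤ) ^ 2) * q ^ (-(2 * N + 1) : ℤ) := by
      rw [← zpow_add₀ hq]; congr 1; push_cast; ring
    rw [mul_add_one, Finset.prod_range_succ, Finset.prod_range_succ', hlast]
    have hmid (k : ℕ) : 2 * ((k + 1 : ℕ) : ℤ) + 1 - 2 * ((N + 1 : ℕ) : ℤ) =
        2 * k + 1 - 2 * N := by push_cast; ring
    have hzero : 2 * ((0 : ℕ) : ℤ) + 1 - 2 * ((N + 1 : ℕ) : ℤ) = -(2 * N + 1) := by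
      push_cast; ring
    simp only [hmid, hzero, ih, hfirst, hsq, qPochhammer_succ]
    ring

lemma finite_jacobi_triple_product_range {K : Type*} [Field K] {q z : K} (hq : q ≠ 0) (hz : z ≠ 0)
    (N : ℕ) :
    qPochhammer (-z * q) (q ^ 2) N * qPochhammer (-z⁻¹ * q) (q ^ 2) N =
      ∑ j ∈ Finset.range (2 * N + 1),
        gaussBinom (q ^ 2) (2 * N) j * (z ^ (j - N : ℤ) * q ^ ((j - N : ℤ) ^ 2)) := by
  have hc : z ^ N * q ^ (-(N : ℤ) ^ 2) ≠ 0 := by positivity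
  refine mul_left_cancel₀ hc ?_
  have hbase (k : ℕ) :
      z * q ^ (2 * k + 1 - 2 * N : ℤ) = z * q ^ (1 - 2 * N : ℤ) * (q ^ 2) ^ k := by
    rw [mul_assoc, ← pow_mul, ← zpow_natCast, ← zpow_add₀ hq]
    congr 2; push_cast; ring
  simp_rw [← prod_one_add_mul_zpow_centered hq hz, hbase,
    prod_one_add_mul_pow_eq_sum_gaussBinom, Finset.mul_sum]
  refine Finset.sum_congr rfl fun j _ ↦ ?_
  have hqexp : (q ^ 2) ^ j.choose 2 * (q ^ (1 - 2 * N : ℤ)) ^ j =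
      q ^ (-(N : ℤ) ^ 2) * q ^ ((j - N : ℤ) ^ 2) := by
    have hchoose : (j.choose 2 : ℤ) * 2 = j * (j - 1) := by
      qify; rw [Nat.cast_choose_two]; ring
    rw [← pow_mul, ← zpow_natCast, ← zpow_natCast, ← zpow_mul, ← zpow_add₀ hq, ← zpow_add₀ hq]
    congr 1
    push_cast
    linear_combination hchoose
  have hzexp : z ^ j = z ^ N * z ^ (j - N : ℤ) := by
    rw [← zpow_natCast, ← zpow_natCast, ← zpow_add₀ hz]; congr 1; ring
  rw [mul_pow, hzexp]
  linear_combination gaussBinom (q ^ 2) (2 * N) j * z ^ N * z ^ (j - N : ℤ) * hqexp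

lemma finite_jacobi_triple_product {K : Type*} [Field K] {q z : K} (hq : q ≠ 0) (hz : z ≠ 0)
    (N : ℕ) :
    qPochhammer (-z * q) (q ^ 2) N * qPochhammer (-z⁻¹ * q) (q ^ 2) N =
      ∑ n ∈ Finset.Icc (-N : ℤ) N,
        gaussBinom (q ^ 2) (2 * N) (n + N).toNat * (z ^ n * q ^ n ^ 2) := by
  rw [finite_jacobi_triple_product_range hq hz]
  refine Finset.sum_bij (fun j _ ↦ (j - N : ℤ)) (fun j hj ↦ ?_) (fun j _ k _ h ↦ by lia)
    (fun n hn ↦ ?_) fun j _ ↦ by simp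
  · rw [Finset.mem_range] at hj
    exact Finset.mem_Icc.mpr (by lia)
  · rw [Finset.mem_Icc] at hn
    exact ⟨(n + N).toNat, Finset.mem_range.mpr (by lia), by lia⟩

variable {𝕜 : Type*} [NormedField 𝕜] {q z : 𝕜}

lemma mul_pow_self_ne_one (hq : ‖q‖ < 1) (n : ℕ) : q * q ^ n ≠ 1 := by
  rw [← pow_succ']
  intro h
  simpa [h] using norm_pow_lt_one hq n.succ_ne_zero

lemma qPochhammer_self_ne_zero (hq : ‖q‖ < 1) (n : ℕ) : qPochhammer q q n ≠ 0 :=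
  Finset.prod_ne_zero_iff.mpr fun i _ ↦ sub_ne_zero.mpr (mul_pow_self_ne_one hq i).symm

variable [CompleteSpace 𝕜]

lemma qPochhammerInf_self_ne_zero (hq : ‖q‖ < 1) : qPochhammerInf q q ≠ 0 :=
  qPochhammerInf_ne_zero hq (mul_pow_self_ne_one hq)

lemma tendsto_gaussBinom_central (hq : ‖q‖ < 1) (n : ℤ) :
    Tendsto (fun N : ℕ ↦ gaussBinom q (2 * N) (n + N).toNat) atTop
      (𝓝 (qPochhammerInf q q)⁻¹) := by
  have hE := tendsto_qPochhammer q hq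
  have hE₀ := qPochhammerInf_self_ne_zero hq
  have htwo : Tendsto (fun N : ℕ ↦ 2 * N) atTop atTop := tendsto_id.const_mul_atTop' two_pos
  have hadd : Tendsto (fun N : ℕ ↦ (n + N).toNat) atTop atTop := tendsto_atTop.2 fun b ↦ by
    filter_upwards [eventually_ge_atTop (n.natAbs + b)] with N hN; lia
  have hsub : Tendsto (fun N : ℕ ↦ (N - n).toNat) atTop atTop := tendsto_atTop.2 fun b ↦ by
    filter_upwards [eventually_ge_atTop (n.natAbs + b)] with N hN; lia
  have hlim := (hE.comp htwo).div ((hE.comp hadd).mul (hE.comp hsub)) (mul_ne_zero hE₀ hE₀)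
  rw [div_mul_cancel_left₀ hE₀] at hlim
  refine hlim.congr' ?_
  filter_upwards [eventually_ge_atTop n.natAbs] with N hN
  have h := gaussBinom_mul_qPochhammer q (n + N).toNat (N - n).toNat
  rw [show (n + N).toNat + (N - n).toNat = 2 * N by lia] at h
  exact (eq_div_of_mul_eq (mul_ne_zero (qPochhammer_self_ne_zero hq _)
    (qPochhammer_self_ne_zero hq _)) h).symm

lemma exists_norm_gaussBinom_le (hq : ‖q‖ < 1) : ∃ C, ∀ M j, ‖gaussBinom q M j‖ ≤ C := by
  have hE := tendsto_qPochhammer q hq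
  obtain ⟨B, hB⟩ := hE.norm.bddAbove_range
  obtain ⟨B', hB'⟩ := (hE.inv₀ (qPochhammerInf_self_ne_zero hq)).norm.bddAbove_range
  replace hB (n : ℕ) : ‖qPochhammer q q n‖ ≤ B := hB ⟨n, rfl⟩
  replace hB' (n : ℕ) : ‖(qPochhammer q q n)⁻¹‖ ≤ B' := hB' ⟨n, rfl⟩
  have hB₀ : 0 ≤ B := (norm_nonneg _).trans (hB 0)
  have hB'₀ : 0 ≤ B' := (norm_nonneg _).trans (hB' 0)
  refine ⟨B * (B' * B'), fun M j ↦ ?_⟩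
  rcases lt_or_ge M j with h | h
  · rw [gaussBinom_eq_zero_of_lt q h, norm_zero]
    positivity
  · obtain ⟨k, rfl⟩ := Nat.exists_eq_add_of_le h
    have hj := qPochhammer_self_ne_zero hq j
    have hk := qPochhammer_self_ne_zero hq k
    rw [eq_div_of_mul_eq (mul_ne_zero hj hk) (gaussBinom_mul_qPochhammer q j k), div_eq_mul_inv,
      mul_inv, norm_mul, norm_mul]
    gcongr
    exacts [hB _, hB' _, hB' _]

lemma summable_pow_mul_pow_sq (z : 𝕜) (hq : ‖q‖ < 1) : Summable fun n : ℕ ↦ z ^ n * q ^ n ^ 2 := by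
  rcases eq_or_ne z 0 with rfl | hz
  · exact summable_of_ne_finset_zero (s := {0}) fun n hn ↦ by simp_all
  rcases eq_or_ne q 0 with rfl | hq₀
  · exact summable_of_ne_finset_zero (s := {0}) fun n hn ↦ by simp_all
  refine summable_of_ratio_test_tendsto_lt_one one_pos
    (.of_forall fun n ↦ mul_ne_zero (pow_ne_zero _ hz) (pow_ne_zero _ hq₀)) ?_
  have hlim : Tendsto (fun n : ℕ ↦ ‖z‖ * ‖q‖ * (‖q‖ ^ 2) ^ n) atTop (𝓝 0) := by
    simpa using (tendsto_pow_atTop_nhds_zero_of_lt_one (by positivity)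
      (pow_lt_one₀ (norm_nonneg q) hq two_ne_zero)).const_mul (‖z‖ * ‖q‖)
  refine hlim.congr fun n ↦ ?_
  have : ‖z‖ ≠ 0 := norm_ne_zero_iff.mpr hz
  have : ‖q‖ ≠ 0 := norm_ne_zero_iff.mpr hq₀
  simp only [norm_mul, norm_pow]
  field_simp
  ring

lemma summable_zpow_mul_zpow_sq (z : 𝕜) (hq : ‖q‖ < 1) :
    Summable fun n : ℤ ↦ z ^ n * q ^ n ^ 2 := by
  refine .of_nat_of_neg (.congr (summable_pow_mul_pow_sq z hq) fun n ↦ ?_)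
    (.congr (summable_pow_mul_pow_sq z⁻¹ hq) fun n ↦ ?_)
  · norm_cast
  · rw [zpow_neg, ← inv_zpow, neg_sq]; norm_cast

theorem jacobi_triple_product (hq₀ : q ≠ 0) (hq : ‖q‖ < 1) (hz : z ≠ 0) :
    ∑' n : ℤ, z ^ n * q ^ n ^ 2 =
      qPochhammerInf (q ^ 2) (q ^ 2) * qPochhammerInf (-z * q) (q ^ 2) *
        qPochhammerInf (-z⁻¹ * q) (q ^ 2) := by
  have hq2 := norm_pow_lt_one hq two_ne_zero
  let c (N : ℕ) (n : ℤ) : 𝕜 :=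
    if n ∈ Finset.Icc (-N : ℤ) N then gaussBinom (q ^ 2) (2 * N) (n + N).toNat else 0
  have hfin (N : ℕ) : qPochhammer (-z * q) (q ^ 2) N * qPochhammer (-z⁻¹ * q) (q ^ 2) N =
      ∑' n, c N n * (z ^ n * q ^ n ^ 2) := by
    rw [finite_jacobi_triple_product hq₀ hz, tsum_eq_sum (s := Finset.Icc (-N : ℤ) N)
      fun n hn ↦ by simp only [c, if_neg hn, zero_mul]]
    exact Finset.sum_congr rfl fun n hn ↦ by simp only [c, if_pos hn]
  obtain ⟨C, hC⟩ := exists_norm_gaussBinom_le hq2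
  have hlim : Tendsto (fun N ↦ ∑' n, c N n * (z ^ n * q ^ n ^ 2)) atTop
      (𝓝 (∑' n : ℤ, (qPochhammerInf (q ^ 2) (q ^ 2))⁻¹ * (z ^ n * q ^ n ^ 2))) := by
    have hsum : Summable fun n : ℤ ↦ ‖z ^ n * q ^ n ^ 2‖ := by
      simpa using summable_zpow_mul_zpow_sq (q := ‖q‖) ‖z‖ (by simpa using hq)
    refine tendsto_tsum_of_dominated_convergence (hsum.mul_left C) (fun n ↦ ?_)
      (.of_forall fun N n ↦ ?_)
    · refine ((tendsto_gaussBinom_central hq2 n).congr' ?_).mul_const _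
      filter_upwards [eventually_ge_atTop n.natAbs] with N hN
      exact (if_pos (Finset.mem_Icc.mpr (by lia))).symm
    · rw [norm_mul]
      gcongr
      simp only [c]
      split_ifs
      · exact hC _ _
      · simpa using (norm_nonneg _).trans (hC 0 0)
  have hprod := (tendsto_qPochhammer (-z * q) hq2).mul (tendsto_qPochhammer (-z⁻¹ * q) hq2)
  have h := tendsto_nhds_unique (hlim.congr fun N ↦ (hfin N).symm) hprod
  rw [tsum_mul_left, inv_mul_eq_iff_eq_mul₀ (qPochhammerInf_self_ne_zero hq2)] at h
  rw [h, mul_assoc]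

end JacobiTripleProduct

section Theta

variable {𝕜 : Type*} [NormedField 𝕜] {q : 𝕜}

/-- The theta series `∑ q^(a n² + b n)` over `n ∈ ℤ` as a function of its nome `q`. Integral
exponents avoid fractional powers; the alternating theta series are those of nome `-q`. -/
noncomputable def thetaSeries (q : 𝕜) (a b : ℤ) : 𝕜 := ∑' n : ℤ, q ^ (a * n ^ 2 + b * n)

lemma thetaSeries_pow (q : 𝕜) (m : ℕ) (a b : ℤ) :
    thetaSeries (q ^ m) a b = thetaSeries q (m * a) (m * b) :=
  tsum_congr fun n ↦ by rw [← zpow_natCast q m, ← zpow_mul]; ring_nf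

lemma thetaSeries_neg_right (q : 𝕜) (a b : ℤ) : thetaSeries q a (-b) = thetaSeries q a b := by
  rw [thetaSeries, ← (Equiv.neg ℤ).tsum_eq]
  exact tsum_congr fun n ↦ by simp

lemma zpow_theta_exponent (hq₀ : q ≠ 0) (a b n : ℤ) :
    q ^ (a * n ^ 2 + b * n) = (q ^ b) ^ n * (q ^ a) ^ n ^ 2 := by
  rw [← zpow_mul, ← zpow_mul, ← zpow_add₀ hq₀, add_comm]

lemma norm_zpow_lt_one (hq : ‖q‖ < 1) {a : ℤ} (ha : 0 < a) : ‖q ^ a‖ < 1 := by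
  lift a to ℕ using ha.le
  simpa using norm_pow_lt_one hq (m := a) (by lia)

lemma summable_norm_zpow_quadratic (hq₀ : q ≠ 0) (hq : ‖q‖ < 1) {a : ℤ} (ha : 0 < a) (b : ℤ) :
    Summable fun n : ℤ ↦ ‖q ^ (a * n ^ 2 + b * n)‖ := by
  simpa [zpow_theta_exponent hq₀] using
    summable_zpow_mul_zpow_sq (‖q ^ b‖) (by simpa using norm_zpow_lt_one hq ha)

variable [CompleteSpace 𝕜]

lemma thetaSeries_eq_qPochhammerInf (hq₀ : q ≠ 0) (hq : ‖q‖ < 1) {a : ℤ} (ha : 0 < a) (b : ℤ) :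
    thetaSeries q a b = qPochhammerInf (q ^ (2 * a)) (q ^ (2 * a)) *
      qPochhammerInf (-q ^ (a + b)) (q ^ (2 * a)) *
        qPochhammerInf (-q ^ (a - b)) (q ^ (2 * a)) := by
  have hsq : q ^ (2 * a) = (q ^ a) ^ 2 := by rw [mul_comm, zpow_mul, zpow_ofNat]
  have hadd : -q ^ (a + b) = -q ^ b * q ^ a := by rw [zpow_add₀ hq₀]; ring
  have hsub : -q ^ (a - b) = -(q ^ b)⁻¹ * q ^ a := by rw [zpow_sub₀ hq₀]; ring
  rw [hsq, hadd, hsub, ← jacobi_triple_product (zpow_ne_zero a hq₀) (norm_zpow_lt_one hq ha)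
    (zpow_ne_zero b hq₀)]
  exact tsum_congr fun n ↦ zpow_theta_exponent hq₀ a b n

lemma summable_zpow_add_quadratic (hq₀ : q ≠ 0) (hq : ‖q‖ < 1) {a c : ℤ} (ha : 0 < a)
    (hc : 0 < c) (b d : ℤ) :
    Summable fun n : ℤ × ℤ ↦ q ^ (a * n.1 ^ 2 + b * n.1 + (c * n.2 ^ 2 + d * n.2)) := by
  simpa [zpow_add₀ hq₀ (_ * _ ^ 2 + _)] using summable_mul_of_summable_norm
    (summable_norm_zpow_quadratic hq₀ hq ha b) (summable_norm_zpow_quadratic hq₀ hq hc d)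

lemma thetaSeries_mul_thetaSeries (hq₀ : q ≠ 0) (hq : ‖q‖ < 1) {a c : ℤ} (ha : 0 < a)
    (hc : 0 < c) (b d : ℤ) :
    thetaSeries q a b * thetaSeries q c d =
      ∑' n : ℤ × ℤ, q ^ (a * n.1 ^ 2 + b * n.1 + (c * n.2 ^ 2 + d * n.2)) := by
  rw [thetaSeries, thetaSeries, tsum_mul_tsum_of_summable_norm
    (summable_norm_zpow_quadratic hq₀ hq ha b) (summable_norm_zpow_quadratic hq₀ hq hc d)]
  exact tsum_congr fun n ↦ (zpow_add₀ hq₀ _ _).symm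

lemma thetaSeries_one_zero_sq (hq₀ : q ≠ 0) (hq : ‖q‖ < 1) :
    thetaSeries q 1 0 ^ 2 = thetaSeries q 2 0 ^ 2 + q * thetaSeries q 2 2 ^ 2 := by
  have hodd : thetaSeries q 2 2 ^ 2 = thetaSeries q 2 (-2) * thetaSeries q 2 2 := by
    rw [thetaSeries_neg_right, sq]
  rw [hodd, sq, sq, thetaSeries_mul_thetaSeries hq₀ hq one_pos one_pos,
    thetaSeries_mul_thetaSeries hq₀ hq two_pos two_pos,
    thetaSeries_mul_thetaSeries hq₀ hq two_pos two_pos, ← tsum_mul_left,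
    tsum_eq_add_tsum_sum_diff (summable_zpow_add_quadratic hq₀ hq one_pos one_pos 0 0)]
  simp_rw [← zpow_one_add₀ hq₀]
  congr! 4 <;> ring

lemma thetaSeries_one_one_sq (hq₀ : q ≠ 0) (hq : ‖q‖ < 1) :
    thetaSeries q 1 1 ^ 2 = 2 * (thetaSeries q 2 0 * thetaSeries q 2 2) := by
  have hswap : 2 * (thetaSeries q 2 0 * thetaSeries q 2 2) =
      thetaSeries q 2 2 * thetaSeries q 2 0 + thetaSeries q 2 0 * thetaSeries q 2 2 := by ring
  rw [hswap, sq, thetaSeries_mul_thetaSeries hq₀ hq one_pos one_pos,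
    thetaSeries_mul_thetaSeries hq₀ hq two_pos two_pos,
    thetaSeries_mul_thetaSeries hq₀ hq two_pos two_pos,
    tsum_eq_add_tsum_sum_diff (summable_zpow_add_quadratic hq₀ hq one_pos one_pos 1 1)]
  congr! 4 <;> ring

lemma thetaSeries_cubic (hq₀ : q ≠ 0) (hq : ‖q‖ < 1) :
    thetaSeries q 1 0 * thetaSeries (q ^ 3) 1 0 - thetaSeries (-q) 1 0 * thetaSeries (-q ^ 3) 1 0 =
      q * (thetaSeries q 1 1 * thetaSeries (q ^ 3) 1 1) := by
  have hq' : ‖-q‖ < 1 := by rwa [norm_neg]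
  have hq₀' : -q ≠ 0 := neg_ne_zero.mpr hq₀
  have hdissect {r : 𝕜} (hr₀ : r ≠ 0) (hr : ‖r‖ < 1) :
      thetaSeries r 1 0 * thetaSeries r 3 0 =
        ∑' n : ℤ × ℤ, r ^ (2 * (2 * (n.1 ^ 2 + n.1 * n.2 + n.2 ^ 2))) +
          r * ∑' n : ℤ × ℤ, r ^ (2 * (2 * (n.1 ^ 2 + n.1 * n.2 + n.2 ^ 2) + n.1 + 2 * n.2)) := by
    rw [thetaSeries_mul_thetaSeries hr₀ hr one_pos three_pos,
      tsum_eq_add_tsum_neg_sub_two_mul (summable_zpow_add_quadratic hr₀ hr one_pos three_pos 0 0),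
      ← tsum_mul_left]
    simp_rw [← zpow_one_add₀ hr₀]
    congr! 4 <;> ring
  have hone : thetaSeries q 1 1 * thetaSeries q 3 3 = 2 * ∑' n : ℤ × ℤ,
      q ^ (2 * (2 * (n.1 ^ 2 + n.1 * n.2 + n.2 ^ 2) + n.1 + 2 * n.2)) := by
    rw [thetaSeries_mul_thetaSeries hq₀ hq one_pos three_pos,
      tsum_eq_add_tsum_two_mul_add (summable_zpow_add_quadratic hq₀ hq one_pos three_pos 1 3),
      two_mul]
    congr! 4 <;> ring
  simp only [← Odd.neg_pow (by decide : Odd 3), thetaSeries_pow, Nat.cast_ofNat, mul_zero, mul_one,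
    hdissect hq₀ hq, hdissect hq₀' hq', hone]
  simp_rw [(even_two_mul _).neg_zpow]
  ring

lemma thetaSeries_one_zero_quintic (hq₀ : q ≠ 0) (hq : ‖q‖ < 1) :
    thetaSeries q 1 0 ^ 2 - thetaSeries (q ^ 5) 1 0 ^ 2 =
      4 * (q * (thetaSeries q 5 4 * thetaSeries q 5 2)) := by
  have h5 : (0 : ℤ) < 5 := by norm_num
  rw [thetaSeries_pow, Nat.cast_ofNat, mul_zero, mul_one, sub_eq_iff_eq_add', sq,
    sq (thetaSeries q 5 0), thetaSeries_mul_thetaSeries hq₀ hq one_pos one_pos,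
    thetaSeries_mul_thetaSeries hq₀ hq h5 h5, thetaSeries_mul_thetaSeries hq₀ hq h5 h5,
    tsum_eq_add_four_nsmul_tsum (summable_zpow_add_quadratic hq₀ hq one_pos one_pos 0 0) 0
      (fun m n ↦ by congr 1; ring), ← tsum_mul_left, nsmul_eq_mul, Nat.cast_ofNat]
  simp_rw [← zpow_one_add₀ hq₀]
  congr 1
  · exact tsum_congr fun n ↦ by congr 1; ring
  · congr 1
    exact tsum_congr fun n ↦ by congr 1; ring

lemma thetaSeries_one_one_quintic (hq₀ : q ≠ 0) (hq : ‖q‖ < 1) :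
    thetaSeries q 1 1 ^ 2 - q ^ 2 * thetaSeries (q ^ 5) 1 1 ^ 2 =
      4 * (thetaSeries q 5 1 * thetaSeries q 5 3) := by
  have h5 : (0 : ℤ) < 5 := by norm_num
  rw [thetaSeries_pow, Nat.cast_ofNat, mul_one, ← thetaSeries_neg_right q 5 1,
    ← thetaSeries_neg_right q 5 3,
    sub_eq_iff_eq_add', sq (thetaSeries q 1 1), sq (thetaSeries q 5 5),
    thetaSeries_mul_thetaSeries hq₀ hq one_pos one_pos,
    thetaSeries_mul_thetaSeries hq₀ hq h5 h5, thetaSeries_mul_thetaSeries hq₀ hq h5 h5,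
    tsum_eq_add_four_nsmul_tsum (summable_zpow_add_quadratic hq₀ hq one_pos one_pos 1 1) (-1)
      (fun m n ↦ by congr 1; ring), ← tsum_mul_left, nsmul_eq_mul, Nat.cast_ofNat,
    ← zpow_natCast]
  simp_rw [← zpow_add₀ hq₀]
  congr 1
  · exact tsum_congr fun n ↦ by congr 1; push_cast; ring
  · congr 1
    exact tsum_congr fun n ↦ by congr 1; ring

lemma thetaSeries_quartic (hq₀ : q ≠ 0) (hq : ‖q‖ < 1) :
    thetaSeries q 1 0 ^ 4 - thetaSeries (-q) 1 0 ^ 4 = q * thetaSeries q 1 1 ^ 4 := by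
  have hneg (m : ℤ) : thetaSeries (-q) 2 (2 * m) = thetaSeries q 2 (2 * m) := by
    simpa using (thetaSeries_pow (-q) 2 1 m).symm.trans (neg_sq q ▸ thetaSeries_pow q 2 1 m)
  have hplus := thetaSeries_one_zero_sq hq₀ hq
  have hminus := thetaSeries_one_zero_sq (neg_ne_zero.mpr hq₀) (by rwa [norm_neg])
  rw [show thetaSeries (-q) 2 0 = thetaSeries q 2 0 from hneg 0,
    show thetaSeries (-q) 2 2 = thetaSeries q 2 2 from hneg 1] at hminus
  calc thetaSeries q 1 0 ^ 4 - thetaSeries (-q) 1 0 ^ 4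
      = (thetaSeries q 1 0 ^ 2) ^ 2 - (thetaSeries (-q) 1 0 ^ 2) ^ 2 := by ring
    _ = q * (thetaSeries q 1 1 ^ 2) ^ 2 := by
      rw [hplus, hminus, thetaSeries_one_one_sq hq₀ hq]; ring
    _ = q * thetaSeries q 1 1 ^ 4 := by ring

end Theta

section WeberProduct

/-- The Euler function `(q; q)_∞`, the product in the Dedekind eta function. -/
noncomputable def eulerFunction {𝕜 : Type*} [NormedField 𝕜] (q : 𝕜) : 𝕜 := qPochhammerInf q q

/-- The product `(q; q²)_∞` in the Weber function `𝔣₁`; at `-q` it gives the Weber function `𝔣`. -/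
noncomputable def weberProduct {𝕜 : Type*} [NormedField 𝕜] (q : 𝕜) : 𝕜 := qPochhammerInf q (q ^ 2)

variable {𝕜 : Type*} [NormedField 𝕜] [CompleteSpace 𝕜] {q : 𝕜}

lemma eulerFunction_ne_zero (hq : ‖q‖ < 1) : eulerFunction q ≠ 0 := qPochhammerInf_self_ne_zero hq

lemma eulerFunction_eq_weberProduct_mul (hq : ‖q‖ < 1) :
    eulerFunction q = weberProduct q * eulerFunction (q ^ 2) := by
  simpa [eulerFunction, weberProduct, Finset.prod_range_succ, ← sq] using
    qPochhammerInf_eq_prod_range q hq two_ne_zero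

lemma weberProduct_ne_zero (hq : ‖q‖ < 1) : weberProduct q ≠ 0 :=
  left_ne_zero_of_mul (eulerFunction_eq_weberProduct_mul hq ▸ eulerFunction_ne_zero hq)

lemma weberProduct_mul_weberProduct_neg (hq : ‖q‖ < 1) :
    weberProduct q * weberProduct (-q) = weberProduct (q ^ 2) := by
  simpa [weberProduct] using qPochhammerInf_mul_neg q (norm_pow_lt_one hq two_ne_zero)

lemma qPochhammerInf_neg_self_mul_weberProduct (hq : ‖q‖ < 1) :
    qPochhammerInf (-q) q * weberProduct q = 1 := by
  have hE := eulerFunction_ne_zero (norm_pow_lt_one hq two_ne_zero)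
  refine mul_right_cancel₀ hE ?_
  calc qPochhammerInf (-q) q * weberProduct q * eulerFunction (q ^ 2)
      = eulerFunction q * qPochhammerInf (-q) q := by
        rw [eulerFunction_eq_weberProduct_mul hq]; ring
    _ = 1 * eulerFunction (q ^ 2) := by
        rw [one_mul]; exact qPochhammerInf_mul_neg q hq

lemma thetaSeries_one_zero (hq₀ : q ≠ 0) (hq : ‖q‖ < 1) :
    thetaSeries q 1 0 = eulerFunction (q ^ 2) * weberProduct (-q) ^ 2 := by
  simpa [eulerFunction, weberProduct, sq, mul_assoc] using
    thetaSeries_eq_qPochhammerInf hq₀ hq one_pos 0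

lemma thetaSeries_neg_one_zero (hq₀ : q ≠ 0) (hq : ‖q‖ < 1) :
    thetaSeries (-q) 1 0 = eulerFunction (q ^ 2) * weberProduct q ^ 2 := by
  simpa using thetaSeries_one_zero (neg_ne_zero.mpr hq₀) (by rwa [norm_neg])

lemma thetaSeries_one_one_mul (hq₀ : q ≠ 0) (hq : ‖q‖ < 1) :
    thetaSeries q 1 1 * weberProduct (q ^ 2) ^ 2 = 2 * eulerFunction (q ^ 2) := by
  have hq2 := norm_pow_lt_one hq two_ne_zero
  have hneg := qPochhammerInf_neg_self_mul_weberProduct hq2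
  have hθ : thetaSeries q 1 1 =
      eulerFunction (q ^ 2) * qPochhammerInf (-q ^ 2) (q ^ 2) * qPochhammerInf (-1) (q ^ 2) := by
    simpa [eulerFunction] using thetaSeries_eq_qPochhammerInf hq₀ hq one_pos 1
  have hone : qPochhammerInf (-1) (q ^ 2) = 2 * qPochhammerInf (-q ^ 2) (q ^ 2) := by
    rw [qPochhammerInf_eq_mul (-1) hq2]; ring_nf
  rw [hθ, hone]
  linear_combination 2 * eulerFunction (q ^ 2) *
    (qPochhammerInf (-q ^ 2) (q ^ 2) * weberProduct (q ^ 2) + 1) * hneg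

lemma thetaSeries_neg_five_four_mul (hq₀ : q ≠ 0) (hq : ‖q‖ < 1) :
    thetaSeries (-q) 5 4 * thetaSeries (-q) 5 2 * weberProduct (q ^ 5) =
      eulerFunction (q ^ 10) ^ 2 * weberProduct q := by
  have hθ (b : ℤ) := thetaSeries_eq_qPochhammerInf (neg_ne_zero.mpr hq₀) (by rwa [norm_neg])
    (show (0 : ℤ) < 5 by norm_num) b
  have h4 : thetaSeries (-q) 5 4 = eulerFunction (q ^ 10) *
      qPochhammerInf (q ^ 9) (q ^ 10) * qPochhammerInf q (q ^ 10) := by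
    simpa [eulerFunction, zpow_ofNat, Even.neg_pow (by decide : Even 10),
      Odd.neg_pow (by decide : Odd 9)] using hθ 4
  have h2 : thetaSeries (-q) 5 2 = eulerFunction (q ^ 10) *
      qPochhammerInf (q ^ 7) (q ^ 10) * qPochhammerInf (q ^ 3) (q ^ 10) := by
    simpa [eulerFunction, zpow_ofNat, Even.neg_pow (by decide : Even 10),
      Odd.neg_pow (by decide : Odd 7), Odd.neg_pow (by decide : Odd 3)] using hθ 2
  have hA : weberProduct q = qPochhammerInf q (q ^ 10) * qPochhammerInf (q ^ 3) (q ^ 10) *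
      weberProduct (q ^ 5) * qPochhammerInf (q ^ 7) (q ^ 10) * qPochhammerInf (q ^ 9) (q ^ 10) := by
    simpa [weberProduct, Finset.prod_range_succ, ← pow_mul, ← pow_succ'] using
      qPochhammerInf_eq_prod_range q (norm_pow_lt_one hq two_ne_zero) (m := 5) (by norm_num)
  rw [h4, h2, hA]
  ring

lemma thetaSeries_five_one_mul (hq₀ : q ≠ 0) (hq : ‖q‖ < 1) :
    thetaSeries q 5 1 * thetaSeries q 5 3 * weberProduct (q ^ 2) =
      eulerFunction (q ^ 10) ^ 2 * weberProduct (q ^ 10) := by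
  have hθ (b : ℤ) := thetaSeries_eq_qPochhammerInf hq₀ hq (show (0 : ℤ) < 5 by norm_num) b
  have h1 : thetaSeries q 5 1 = eulerFunction (q ^ 10) *
      qPochhammerInf (-q ^ 6) (q ^ 10) * qPochhammerInf (-q ^ 4) (q ^ 10) := by
    simpa [eulerFunction, zpow_ofNat] using hθ 1
  have h3 : thetaSeries q 5 3 = eulerFunction (q ^ 10) *
      qPochhammerInf (-q ^ 8) (q ^ 10) * qPochhammerInf (-q ^ 2) (q ^ 10) := by
    simpa [eulerFunction, zpow_ofNat] using hθ 3
  have h5 : qPochhammerInf (-q ^ 2) (q ^ 2) =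
      qPochhammerInf (-q ^ 2) (q ^ 10) * qPochhammerInf (-q ^ 4) (q ^ 10) *
        qPochhammerInf (-q ^ 6) (q ^ 10) * qPochhammerInf (-q ^ 8) (q ^ 10) *
          qPochhammerInf (-q ^ 10) (q ^ 10) := by
    have h := qPochhammerInf_eq_prod_range (-q ^ 2) (norm_pow_lt_one hq two_ne_zero) (m := 5)
      (by norm_num)
    simp only [Finset.prod_range_succ, Finset.prod_range_zero, ← pow_mul, neg_mul, ← pow_add] at h
    simpa using h
  have hA2 := qPochhammerInf_neg_self_mul_weberProduct (norm_pow_lt_one hq two_ne_zero)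
  have hA10 := qPochhammerInf_neg_self_mul_weberProduct
    (norm_pow_lt_one hq (by norm_num : 10 ≠ 0))
  rw [h5] at hA2
  rw [h1, h3]
  linear_combination eulerFunction (q ^ 10) ^ 2 * weberProduct (q ^ 10) * hA2 -
    eulerFunction (q ^ 10) ^ 2 * weberProduct (q ^ 2) * qPochhammerInf (-q ^ 2) (q ^ 10) *
      qPochhammerInf (-q ^ 4) (q ^ 10) * qPochhammerInf (-q ^ 6) (q ^ 10) *
        qPochhammerInf (-q ^ 8) (q ^ 10) * hA10

lemma weberProduct_quartic (hq₀ : q ≠ 0) (hq : ‖q‖ < 1) :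
    (weberProduct q * weberProduct (-q)) ^ 8 * (weberProduct (-q) ^ 8 - weberProduct q ^ 8) =
      16 * q := by
  have hθ := thetaSeries_quartic hq₀ hq
  have h1 := thetaSeries_one_one_mul hq₀ hq
  have hE := eulerFunction_ne_zero (norm_pow_lt_one hq two_ne_zero)
  rw [thetaSeries_one_zero hq₀ hq, thetaSeries_neg_one_zero hq₀ hq] at hθ
  rw [weberProduct_mul_weberProduct_neg hq]
  refine mul_left_cancel₀ (pow_ne_zero 4 hE) ?_
  calc eulerFunction (q ^ 2) ^ 4 *
        (weberProduct (q ^ 2) ^ 8 * (weberProduct (-q) ^ 8 - weberProduct q ^ 8))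
      = q * (thetaSeries q 1 1 * weberProduct (q ^ 2) ^ 2) ^ 4 := by
        linear_combination weberProduct (q ^ 2) ^ 8 * hθ
    _ = eulerFunction (q ^ 2) ^ 4 * (16 * q) := by rw [h1]; ring

lemma weberProduct_cubic (hq₀ : q ≠ 0) (hq : ‖q‖ < 1) :
    (weberProduct q * weberProduct (-q) * (weberProduct (q ^ 3) * weberProduct (-q ^ 3))) ^ 2 *
      ((weberProduct (-q) * weberProduct (-q ^ 3)) ^ 2 -
        (weberProduct q * weberProduct (q ^ 3)) ^ 2) = 4 * q := by
  have hq3 := norm_pow_lt_one hq three_ne_zero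
  have hq₀3 := pow_ne_zero 3 hq₀
  have hE := eulerFunction_ne_zero (norm_pow_lt_one hq two_ne_zero)
  have hE3 := eulerFunction_ne_zero (norm_pow_lt_one hq3 two_ne_zero)
  have h1 := thetaSeries_one_one_mul hq₀ hq
  have h3 := thetaSeries_one_one_mul hq₀3 hq3
  have hθ := thetaSeries_cubic hq₀ hq
  rw [thetaSeries_one_zero hq₀ hq, thetaSeries_one_zero hq₀3 hq3, thetaSeries_neg_one_zero hq₀ hq,
    thetaSeries_neg_one_zero hq₀3 hq3] at hθ
  rw [weberProduct_mul_weberProduct_neg hq, weberProduct_mul_weberProduct_neg hq3]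
  refine mul_left_cancel₀ (mul_ne_zero hE hE3) ?_
  linear_combination (weberProduct (q ^ 2) * weberProduct ((q ^ 3) ^ 2)) ^ 2 * hθ +
    q * thetaSeries (q ^ 3) 1 1 * weberProduct ((q ^ 3) ^ 2) ^ 2 * h1 +
      2 * q * eulerFunction (q ^ 2) * h3

lemma weberProduct_quintic_one_zero (hq₀ : q ≠ 0) (hq : ‖q‖ < 1) :
    (weberProduct (q ^ 5) ^ 4 * eulerFunction (q ^ 10) ^ 2 -
      weberProduct q ^ 4 * eulerFunction (q ^ 2) ^ 2) * weberProduct (q ^ 5) =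
        4 * q * eulerFunction (q ^ 10) ^ 2 * weberProduct q := by
  have hθ := thetaSeries_one_zero_quintic (neg_ne_zero.mpr hq₀) (by rwa [norm_neg])
  rw [Odd.neg_pow (by decide : Odd 5), thetaSeries_neg_one_zero hq₀ hq,
    thetaSeries_neg_one_zero (pow_ne_zero 5 hq₀) (norm_pow_lt_one hq (by norm_num)),
    ← pow_mul] at hθ
  linear_combination -weberProduct (q ^ 5) * hθ + 4 * q * thetaSeries_neg_five_four_mul hq₀ hq

lemma weberProduct_quintic_one_one [CharZero 𝕜] (hq₀ : q ≠ 0) (hq : ‖q‖ < 1) :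
    weberProduct (q ^ 10) ^ 4 * eulerFunction (q ^ 2) ^ 2 =
      eulerFunction (q ^ 10) ^ 2 * weberProduct (q ^ 2) ^ 3 *
        (q ^ 2 * weberProduct (q ^ 2) + weberProduct (q ^ 10) ^ 5) := by
  have hθ := thetaSeries_one_one_quintic hq₀ hq
  have h1 := thetaSeries_one_one_mul hq₀ hq
  have h5 := thetaSeries_one_one_mul (pow_ne_zero 5 hq₀) (norm_pow_lt_one hq (by norm_num))
  have hprod := thetaSeries_five_one_mul hq₀ hq
  rw [← pow_mul] at h5
  set U := weberProduct (q ^ 2)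
  set W := weberProduct (q ^ 10)
  refine mul_left_cancel₀ (by norm_num : (4 : 𝕜) ≠ 0) ?_
  calc 4 * (W ^ 4 * eulerFunction (q ^ 2) ^ 2)
      = U ^ 4 * W ^ 4 * thetaSeries q 1 1 ^ 2 := by
        linear_combination -W ^ 4 * (thetaSeries q 1 1 * U ^ 2 + 2 * eulerFunction (q ^ 2)) * h1
    _ = q ^ 2 * U ^ 4 * (thetaSeries (q ^ 5) 1 1 * W ^ 2) ^ 2 +
          4 * W ^ 4 * U ^ 3 * (thetaSeries q 5 1 * thetaSeries q 5 3 * U) := by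
        linear_combination U ^ 4 * W ^ 4 * hθ
    _ = 4 * (eulerFunction (q ^ 10) ^ 2 * U ^ 3 * (q ^ 2 * U + W ^ 5)) := by
        rw [h5, hprod]; ring

lemma schlafli_three_of_theta_relations {K : Type*} [Field K] [CharZero K] {q u v x y : K}
    (hq : q ≠ 0) (hcubic : (u * x * (v * y)) ^ 2 * ((x * y) ^ 2 - (u * v) ^ 2) = 4 * q)
    (hu : (u * x) ^ 8 * (x ^ 8 - u ^ 8) = 16 * q)
    (hv : (v * y) ^ 8 * (y ^ 8 - v ^ 8) = 16 * q ^ 3) :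
    v ^ 24 + q ^ 2 * u ^ 24 =
      (u * v) ^ 18 + 18 * q * (u * v) ^ 12 + 64 * q ^ 2 * (u * v) ^ 6 := by
  have hne : u * x * (v * y) ≠ 0 := by
    rintro h
    simp [h, hq] at hcubic
  have hdiff : (x ^ 8 - u ^ 8) * (y ^ 8 - v ^ 8) = ((x * y) ^ 2 - (u * v) ^ 2) ^ 4 := by
    refine mul_left_cancel₀ (pow_ne_zero 8 hne) ?_
    calc (u * x * (v * y)) ^ 8 * ((x ^ 8 - u ^ 8) * (y ^ 8 - v ^ 8))
        = (u * x) ^ 8 * (x ^ 8 - u ^ 8) * ((v * y) ^ 8 * (y ^ 8 - v ^ 8)) := by ring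
      _ = (4 * q) ^ 4 := by rw [hu, hv]; ring
      _ = (u * x * (v * y)) ^ 8 * ((x * y) ^ 2 - (u * v) ^ 2) ^ 4 := by rw [← hcubic]; ring
  -- Complete the square in `hu` and `hv`, viewed as quadratics in `x ^ 8` and `y ^ 8`.
  have hmean : (u * v) ^ 4 * ((2 * x ^ 8 - u ^ 8) * (2 * y ^ 8 - v ^ 8)) =
      (u * v) ^ 12 + 32 * q * (u * v) ^ 6 + 64 * q ^ 2 := by
    linear_combination 2 * (u * v) ^ 4 * hdiff +
      (4 * (u * x * (v * y)) ^ 2 * ((x * y) ^ 2 - (u * v) ^ 2) + 16 * q + 8 * (u * v) ^ 6) * hcubic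
  have husq : u ^ 8 * (2 * x ^ 8 - u ^ 8) ^ 2 = u ^ 24 + 64 * q := by linear_combination 4 * hu
  have hvsq : v ^ 8 * (2 * y ^ 8 - v ^ 8) ^ 2 = v ^ 24 + 64 * q ^ 3 := by
    linear_combination 4 * hv
  have hprod : (u ^ 24 + 64 * q) * (v ^ 24 + 64 * q ^ 3) =
      ((u * v) ^ 12 + 32 * q * (u * v) ^ 6 + 64 * q ^ 2) ^ 2 := by
    rw [← husq, ← hvsq, ← hmean]; ring
  refine mul_left_cancel₀ (mul_ne_zero (by norm_num : (64 : K) ≠ 0) hq) ?_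
  linear_combination hprod

lemma weberProduct_schlafli_three [CharZero 𝕜] (hq₀ : q ≠ 0) (hq : ‖q‖ < 1) :
    weberProduct (q ^ 3) ^ 24 + q ^ 2 * weberProduct q ^ 24 =
      (weberProduct q * weberProduct (q ^ 3)) ^ 18 +
        18 * q * (weberProduct q * weberProduct (q ^ 3)) ^ 12 +
          64 * q ^ 2 * (weberProduct q * weberProduct (q ^ 3)) ^ 6 :=
  schlafli_three_of_theta_relations hq₀ (weberProduct_cubic hq₀ hq) (weberProduct_quartic hq₀ hq)
    (weberProduct_quartic (pow_ne_zero 3 hq₀) (norm_pow_lt_one hq three_ne_zero))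

lemma weberProduct_schlafli_five [CharZero 𝕜] (hq₀ : q ≠ 0) (hq : ‖q‖ < 1) :
    weberProduct (q ^ 10) ^ 6 - q ^ 2 * weberProduct (q ^ 2) ^ 6 =
      weberProduct (q ^ 2) * weberProduct (q ^ 10) *
        (4 * q ^ 2 + (weberProduct (q ^ 2) * weberProduct (q ^ 10)) ^ 4) := by
  have hq2 := norm_pow_lt_one hq two_ne_zero
  have hq10 := norm_pow_lt_one hq (by norm_num : 10 ≠ 0)
  have hone := weberProduct_quintic_one_one hq₀ hq
  have hzero := weberProduct_quintic_one_zero (pow_ne_zero 2 hq₀) hq2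
  rw [eulerFunction_eq_weberProduct_mul hq2, eulerFunction_eq_weberProduct_mul hq10] at hone
  simp only [← pow_mul, Nat.reduceMul] at hone hzero
  have hU := weberProduct_ne_zero hq2
  have hW := weberProduct_ne_zero hq10
  have hE := eulerFunction_ne_zero (norm_pow_lt_one hq (by norm_num : 20 ≠ 0))
  refine mul_left_cancel₀ (mul_ne_zero (mul_ne_zero (pow_ne_zero 2 hU) (pow_ne_zero 2 hW))
    (pow_ne_zero 2 hE)) ?_
  linear_combination weberProduct (q ^ 2) ^ 2 * weberProduct (q ^ 10) ^ 3 * hzero +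
    weberProduct (q ^ 2) ^ 4 * hone

end WeberProduct

section WeberFunction

lemma dedekindEta_eq_eulerFunction (τ : ℂ) :
    dedekindEta τ = cexp (Real.pi * I * τ / 12) * eulerFunction (cexp (2 * Real.pi * I * τ)) := by
  rw [dedekindEta, eulerFunction, qPochhammerInf]
  congr 1
  refine tprod_congr fun n ↦ ?_
  rw [← pow_succ', ← Complex.exp_nat_mul]
  push_cast
  ring_nf

lemma norm_cexp_two_pi_I_mul_lt_one {τ : ℂ} (hτ : 0 < τ.im) :
    ‖cexp (2 * Real.pi * I * τ)‖ < 1 := by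
  simpa [Complex.norm_exp] using by positivity

lemma dedekindEta_eq_eta (τ : ℂ) : dedekindEta τ = ModularForm.eta τ := by
  rw [dedekindEta, ModularForm.eta, Function.Periodic.qParam]
  congr 1
  · push_cast
    ring_nf
  · simp only [ModularForm.eta_q_eq_cexp]

lemma dedekindEta_I_mul_ne_zero {t : ℝ} (ht : 0 < t) : dedekindEta (I * t) ≠ 0 :=
  dedekindEta_eq_eta _ ▸ ModularForm.eta_ne_zero (by simpa [UpperHalfPlane.upperHalfPlaneSet])

lemma dedekindEta_div_dedekindEta_two_mul {τ : ℂ} (hτ : 0 < τ.im) :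
    dedekindEta τ / dedekindEta (2 * τ) =
      cexp (-(Real.pi * I * τ / 12)) * weberProduct (cexp (2 * Real.pi * I * τ)) := by
  have hq := norm_cexp_two_pi_I_mul_lt_one hτ
  have hE := eulerFunction_ne_zero (norm_pow_lt_one hq two_ne_zero)
  have hsq : cexp (2 * Real.pi * I * (2 * τ)) = cexp (2 * Real.pi * I * τ) ^ 2 := by
    rw [← Complex.exp_nat_mul]
    push_cast
    ring_nf
  have hexp : cexp (Real.pi * I * τ / 12) =
      cexp (-(Real.pi * I * τ / 12)) * cexp (Real.pi * I * (2 * τ) / 12) := by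
    rw [← Complex.exp_add]
    ring_nf
  rw [dedekindEta_eq_eulerFunction, dedekindEta_eq_eulerFunction, hsq,
    eulerFunction_eq_weberProduct_mul hq, hexp]
  generalize cexp (2 * Real.pi * I * τ) = q at *
  field_simp [Complex.exp_ne_zero]

lemma ofReal_weberProduct (q : ℝ) : ((weberProduct q : ℝ) : ℂ) = weberProduct (q : ℂ) := by
  refine (Function.LeftInverse.map_tprod (g := Complex.ofRealHom) (fun n ↦ 1 - q * (q ^ 2) ^ n)
    Complex.continuous_ofReal Complex.continuous_re Complex.ofReal_re).trans ?_
  exact tprod_congr fun n ↦ by simp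

/-- The values `𝔣₁(it) = η(it/2) / η(it)` of the Weber function `𝔣₁` on the imaginary axis. -/
noncomputable def weberF1 (t : ℝ) : ℝ :=
  Real.exp (Real.pi * t / 24) * weberProduct (Real.exp (-(Real.pi * t)))

lemma exp_neg_pi_mul_lt_one {t : ℝ} (ht : 0 < t) : Real.exp (-(Real.pi * t)) < 1 :=
  Real.exp_lt_one_iff.mpr (neg_neg_of_pos (by positivity))

lemma weberF1_pos {t : ℝ} (ht : 0 < t) : 0 < weberF1 t :=
  have hq := exp_neg_pi_mul_lt_one ht
  mul_pos (Real.exp_pos _) (qPochhammerInf_pos hq (sq_nonneg _)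
    (pow_lt_one₀ (Real.exp_nonneg _) hq two_ne_zero))

lemma monotoneOn_weberF1 : MonotoneOn weberF1 (Set.Ioi 0) := by
  intro s (hs : 0 < s) t _ hst
  have hq := exp_neg_pi_mul_lt_one hs
  have hqt : Real.exp (-(Real.pi * t)) ≤ Real.exp (-(Real.pi * s)) := by gcongr
  have hsq := pow_lt_one₀ (Real.exp_nonneg _) hq two_ne_zero
  refine mul_le_mul (by gcongr) ?_ (qPochhammerInf_pos hq (sq_nonneg _) hsq).le (Real.exp_nonneg _)
  exact qPochhammerInf_anti (Real.exp_nonneg _) hqt hq.le (sq_nonneg _) (by gcongr) hsq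

lemma weberProduct_exp_pow (t : ℝ) (n : ℕ) :
    weberProduct (Real.exp (-(Real.pi * t / 24)) ^ (24 * n)) =
      Real.exp (-(Real.pi * t / 24)) ^ n * weberF1 (n * t) := by
  rw [weberF1, ← mul_assoc, ← Real.exp_nat_mul, ← Real.exp_nat_mul, ← Real.exp_add]
  push_cast
  ring_nf
  simp

lemma weberF1_schlafli_three {t : ℝ} (ht : 0 < t) :
    weberF1 t ^ 24 + weberF1 (3 * t) ^ 24 =
      (weberF1 t * weberF1 (3 * t)) ^ 18 + 18 * (weberF1 t * weberF1 (3 * t)) ^ 12 +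
        64 * (weberF1 t * weberF1 (3 * t)) ^ 6 := by
  have hU := weberProduct_exp_pow t 1
  have hV := weberProduct_exp_pow t 3
  set ε := Real.exp (-(Real.pi * t / 24))
  have hε₀ : ε ≠ 0 := Real.exp_ne_zero _
  have hε₁ : ‖ε‖ < 1 := by simpa [ε] using by positivity
  have h := weberProduct_schlafli_three (pow_ne_zero 24 hε₀)
    (norm_pow_lt_one hε₁ (by norm_num))
  norm_num [← pow_mul] at hU hV h
  rw [hU, hV] at h
  refine mul_left_cancel₀ (pow_ne_zero 72 hε₀) ?_
  linear_combination h

lemma weberF1_schlafli_five {t : ℝ} (ht : 0 < t) :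
    weberF1 (5 * t) ^ 6 - weberF1 t ^ 6 =
      weberF1 t * weberF1 (5 * t) * (4 + (weberF1 t * weberF1 (5 * t)) ^ 4) := by
  have hU := weberProduct_exp_pow t 1
  have hW := weberProduct_exp_pow t 5
  set ε := Real.exp (-(Real.pi * t / 24))
  have hε₀ : ε ≠ 0 := Real.exp_ne_zero _
  have hε₁ : ‖ε‖ < 1 := by simpa [ε] using by positivity
  have h := weberProduct_schlafli_five (pow_ne_zero 12 hε₀)
    (norm_pow_lt_one hε₁ (by norm_num))
  norm_num [← pow_mul] at hU hW h
  rw [hU, hW] at h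
  refine mul_left_cancel₀ (pow_ne_zero 30 hε₀) ?_
  linear_combination h

lemma dedekindEta_div_eq_weberF1 {t : ℝ} (ht : 0 < t) :
    dedekindEta (I * t) / dedekindEta (2 * (I * t)) = weberF1 (2 * t) := by
  rw [dedekindEta_div_dedekindEta_two_mul (by simpa), weberF1, Complex.ofReal_mul,
    ofReal_weberProduct, Complex.ofReal_exp, Complex.ofReal_exp]
  congr! 3 <;> push_cast
  · linear_combination -(Real.pi * t / 12) * I_sq
  · linear_combination 2 * Real.pi * t * I_sq

lemma csqrt_ofReal_mul {t : ℝ} (ht : 0 < t) {z : ℂ} (hz : z ≠ 0) :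
    Complex.sqrt (t * z) = Real.sqrt t * Complex.sqrt z := by
  have ht' : (t : ℂ) ≠ 0 := by exact_mod_cast ht.ne'
  rw [sqrt_eq_exp (mul_ne_zero ht' hz), sqrt_eq_exp hz, Complex.log_ofReal_mul ht hz, add_div,
    Complex.exp_add, ← Real.exp_log (Real.sqrt_pos.mpr ht), Real.log_sqrt ht.le]
  push_cast
  rfl

lemma dedekindEta_I_div {t : ℝ} (ht : 0 < t) :
    dedekindEta (I * (1 / t : ℝ)) = Real.sqrt t * dedekindEta (I * t) := by
  have hI : Complex.sqrt I ≠ 0 := by simp [Complex.sqrt]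
  have h : ModularForm.eta (-1 / (I * t)) = (Complex.sqrt I)⁻¹ * (Complex.sqrt (I * t) *
      ModularForm.eta (I * t)) := by
    simpa using ModularForm.eta_comp_eq_csqrt_I_inv (x := I * t)
      (by simpa [UpperHalfPlane.upperHalfPlaneSet])
  have hinv : I * (1 / t : ℝ) = -1 / (I * t) := by
    push_cast
    field_simp
    rw [I_sq, neg_div]
  rw [hinv, dedekindEta_eq_eta, dedekindEta_eq_eta, h, mul_comm I, csqrt_ofReal_mul ht I_ne_zero]
  field_simp

lemma weberF1_two_mul_mul_weberF1_inv {t : ℝ} (ht : 0 < t) :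
    weberF1 (2 * t) * weberF1 (1 / t) = Real.sqrt 2 := by
  have hη := dedekindEta_I_mul_ne_zero ht
  have hη2 := dedekindEta_I_mul_ne_zero (mul_pos two_pos ht)
  have hst : (Real.sqrt t : ℂ) ≠ 0 := by exact_mod_cast (Real.sqrt_pos.mpr ht).ne'
  have hsqrt : Real.sqrt (2 * t) = Real.sqrt 2 * Real.sqrt t := Real.sqrt_mul zero_le_two t
  have h1 := dedekindEta_div_eq_weberF1 ht
  have h2 := dedekindEta_div_eq_weberF1 (t := 1 / (2 * t)) (by positivity)
  have hhalf : 2 * (I * ((1 / (2 * t) : ℝ) : ℂ)) = I * (1 / t : ℝ) := by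
    push_cast
    field_simp
  have htwo : 2 * (I * (t : ℂ)) = I * (2 * t : ℝ) := by
    push_cast
    ring
  rw [hhalf, dedekindEta_I_div ht, dedekindEta_I_div (by positivity), hsqrt,
    show 2 * (1 / (2 * t)) = 1 / t by field_simp] at h2
  rw [htwo] at h1
  have h : (weberF1 (2 * t) * weberF1 (1 / t) : ℂ) = Real.sqrt 2 := by
    rw [← h1, ← h2]
    push_cast
    push_cast at hη2
    generalize dedekindEta (I * (2 * t)) = b at *
    field_simp
  exact_mod_cast h

end WeberFunction

section Evaluation

lemma pow_four_add_pow_four_of_schlafli {u v : ℝ} (hu : 0 < u) (hv : 0 < v)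
    (h3 : u ^ 24 + v ^ 24 = (u * v) ^ 18 + 18 * (u * v) ^ 12 + 64 * (u * v) ^ 6)
    (h5 : 8 - (u * v) ^ 6 = 4 * Real.sqrt 2 * (u * v) * (u ^ 4 + v ^ 4)) :
    u ^ 4 + v ^ 4 = 3 * (u * v) ^ 2 := by
  have hsq : (8 - (u * v) ^ 6) ^ 2 = 32 * (u * v) ^ 2 * (u ^ 4 + v ^ 4) ^ 2 := by
    rw [h5]
    linear_combination 16 * (u * v) ^ 2 * (u ^ 4 + v ^ 4) ^ 2 * Real.sq_sqrt zero_le_two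
  have hfactor : ((u ^ 4 + v ^ 4) ^ 2 - (3 * (u * v) ^ 2) ^ 2) *
      ((u ^ 4 + v ^ 4) ^ 4 + 3 * (u ^ 4 + v ^ 4) ^ 2 * (u * v) ^ 4 + 4 * (u * v) ^ 8) = 0 := by
    linear_combination h3 + (u * v) ^ 6 * hsq
  have hpos :
      0 < (u ^ 4 + v ^ 4) ^ 4 + 3 * (u ^ 4 + v ^ 4) ^ 2 * (u * v) ^ 4 + 4 * (u * v) ^ 8 := by
    positivity
  rw [mul_eq_zero, or_iff_left hpos.ne', sub_eq_zero] at hfactor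
  exact (pow_left_inj₀ (by positivity) (by positivity) two_ne_zero).mp hfactor

lemma div_sq_eq_of_pow_four_add_pow_four {u v : ℝ} (hu : 0 < u) (huv : u ≤ v)
    (h : u ^ 4 + v ^ 4 = 3 * (u * v) ^ 2) : (u / v) ^ 2 = (3 - Real.sqrt 5) / 2 := by
  have hv : 0 < v := hu.trans_le huv
  have h5 : Real.sqrt 5 ^ 2 = 5 := Real.sq_sqrt (by norm_num)
  have hle : (u / v) ^ 2 ≤ 1 := pow_le_one₀ (by positivity) ((div_le_one hv).mpr huv)
  have hquad : ((u / v) ^ 2) ^ 2 - 3 * (u / v) ^ 2 + 1 = 0 := by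
    field_simp
    linear_combination h
  have hroots : ((u / v) ^ 2 - (3 - Real.sqrt 5) / 2) *
      ((u / v) ^ 2 - (3 + Real.sqrt 5) / 2) = 0 := by
    linear_combination hquad - h5 / 4
  rcases mul_eq_zero.mp hroots with hroot | hroot
  · exact sub_eq_zero.mp hroot
  · linarith [Real.sqrt_nonneg 5]

lemma weberF1_div_sq {s : ℝ} (hs : 0 < s) (hs30 : 30 * s ^ 2 = 1) :
    (weberF1 (2 * s) / weberF1 (6 * s)) ^ 2 = (3 - Real.sqrt 5) / 2 := by
  have hu := weberF1_pos (show 0 < 2 * s by positivity)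
  have hv := weberF1_pos (show 0 < 6 * s by positivity)
  have h3 := weberF1_schlafli_three (show 0 < 2 * s by positivity)
  have h5 := weberF1_schlafli_five (show 0 < 2 * s by positivity)
  have hinv := weberF1_two_mul_mul_weberF1_inv (show 0 < 3 * s by positivity)
  have h10 : 1 / (3 * s) = 10 * s := by
    field_simp
    linear_combination -hs30
  rw [h10, ← mul_assoc] at hinv
  norm_num [← mul_assoc] at h3 h5 hinv
  refine div_sq_eq_of_pow_four_add_pow_four hu (monotoneOn_weberF1 (Set.mem_Ioi.mpr (by positivity))
    (Set.mem_Ioi.mpr (by positivity)) (by linarith))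
    (pow_four_add_pow_four_of_schlafli hu hv h3 ?_)
  have h2 : Real.sqrt 2 ^ 2 = 2 := Real.sq_sqrt zero_le_two
  set u := weberF1 (2 * s)
  set v := weberF1 (6 * s)
  set w := weberF1 (10 * s)
  calc 8 - (u * v) ^ 6
      = (v * w) ^ 6 - (u * v) ^ 6 := by
        rw [hinv]; linear_combination -(Real.sqrt 2 ^ 4 + 2 * Real.sqrt 2 ^ 2 + 4) * h2
    _ = v ^ 6 * (w ^ 6 - u ^ 6) := by ring
    _ = 4 * u * v ^ 5 * (v * w) + u ^ 5 * v * (v * w) ^ 5 := by rw [h5]; ring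
    _ = 4 * Real.sqrt 2 * (u * v) * (u ^ 4 + v ^ 4) := by
        rw [hinv]; linear_combination u ^ 5 * v * Real.sqrt 2 * (Real.sqrt 2 ^ 2 + 2) * h2

lemma zEta_I_mul {t : ℝ} (ht : 0 < t) :
    zEta (I * t) = (weberF1 (2 * t) / weberF1 (6 * t) : ℝ) ^ 12 := by
  have h3 : 3 * (I * t) = I * (3 * t : ℝ) := by
    push_cast
    ring
  have h6 : 6 * (I * t) = 2 * (I * (3 * t : ℝ)) := by
    push_cast
    ring
  rw [zEta, h3, h6, show 6 * t = 2 * (3 * t) by ring, Complex.ofReal_div,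
    ← dedekindEta_div_eq_weberF1 ht, ← dedekindEta_div_eq_weberF1 (mul_pos three_pos ht),
    div_div_div_eq]

end Evaluation

theorem eta_quotient_evaluation :
    zEta (I / Real.sqrt 30) = ((161 : ℂ) - 72 * Real.sqrt 5) ∧
      (161 - 72 * Real.sqrt 5 : ℝ) = ((Real.sqrt 5 - 1) / 2) ^ 12 := by
  have h5 : Real.sqrt 5 ^ 2 = 5 := Real.sq_sqrt (by norm_num)
  have hgolden : (3 - Real.sqrt 5) / 2 = ((Real.sqrt 5 - 1) / 2) ^ 2 := by
    linear_combination -h5 / 4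
  have hpow : ((3 - Real.sqrt 5) / 2) ^ 6 = 161 - 72 * Real.sqrt 5 := by
    have hsq : ((3 - Real.sqrt 5) / 2) ^ 2 = (7 - 3 * Real.sqrt 5) / 2 := by
      linear_combination h5 / 4
    rw [pow_mul _ 2 3, hsq]
    linear_combination (-27 / 8 * Real.sqrt 5 + 189 / 8) * h5
  constructor
  · have hs : 0 < 1 / Real.sqrt 30 := by positivity
    have hs30 : 30 * (1 / Real.sqrt 30) ^ 2 = 1 := by
      rw [div_pow, Real.sq_sqrt (by norm_num)]
      norm_num
    have hratio := weberF1_div_sq hs hs30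
    rw [show I / Real.sqrt 30 = I * (1 / Real.sqrt 30 : ℝ) by push_cast; ring, zEta_I_mul hs,
      pow_mul _ 2 6]
    exact_mod_cast hratio ▸ hpow
  · rw [← hpow, hgolden, ← pow_mul]
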